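/- Let S be a scheme and let s₁, s₂, s₃, s₁′, s₂′, s₃′ : S → ℙ¹_S be six sections of the structure morphism ℙ¹_S → S such that the images of s₁, s₂, s₃ are pairwise disjoint and the images of s₁′, s₂′, s₃′ are pairwise disjoint. Then there exists a unique S-automorphism β of ℙ¹_S such that β ∘ sᵢ = sᵢ′ for i = 1, 2, 3. -/

import Mathlib

universe u

open AlgebraicGeometry CategoryTheory CategoryTheory.Limits

attribute [local instance] MvPolynomial.gradedAlgebra

/-- The projective line over `ℤ`, i.e. `Proj ℤ[X₀, X₁]`. -/
noncomputable def P1Z : Scheme.{u} :=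
  AlgebraicGeometry.Proj (MvPolynomial.homogeneousSubmodule (Fin 2) (ULift.{u} ℤ))

/-- The projective line `ℙ¹_S` over a scheme `S`, i.e. the base change to `S` of
`Proj ℤ[X₀, X₁]` (the fibre product over the terminal scheme, which is `Spec ℤ`). -/
noncomputable def P1 (S : Scheme.{u}) : Scheme.{u} :=
  pullback (terminal.from S) (terminal.from P1Z)

/-- The structure morphism `ℙ¹_S ⟶ S`. -/
noncomputable def P1proj (S : Scheme.{u}) : P1 S ⟶ S :=
  pullback.fst (terminal.from S) (terminal.from P1Z)

namespace P1Aux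

open HomogeneousLocalization

noncomputable section

/-- the grading -/
abbrev gr : ℕ → Submodule (ULift.{u} ℤ) (MvPolynomial (Fin 2) (ULift.{u} ℤ)) :=
  MvPolynomial.homogeneousSubmodule (Fin 2) (ULift.{u} ℤ)

abbrev PX (i : Fin 2) : MvPolynomial (Fin 2) (ULift.{u} ℤ) := MvPolynomial.X i

lemma PX_mem (i : Fin 2) : PX.{u} i ∈ gr.{u} 1 := MvPolynomial.isHomogeneous_X _ i

/-- integers into a ring -/
def zc (A : Type u) [CommRing A] : ULift.{u} ℤ →+* A :=
  (Int.castRingHom A).comp (ULift.ringEquiv : ULift.{u} ℤ ≃+* ℤ).toRingHom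

lemma zc_unique {A : Type u} [CommRing A] (f : ULift.{u} ℤ →+* A) : f = zc A := by
  ext x
  have h : f.comp (ULift.ringEquiv : ULift.{u} ℤ ≃+* ℤ).symm.toRingHom = Int.castRingHom A :=
    Subsingleton.elim _ _
  have := RingHom.congr_fun h x.down
  exact this

/-- evaluation -/
def evR {A : Type u} [CommRing A] (v : Fin 2 → A) :
    MvPolynomial (Fin 2) (ULift.{u} ℤ) →+* A := MvPolynomial.eval₂Hom (zc A) v

@[simp] lemma evR_X {A : Type u} [CommRing A] (v : Fin 2 → A) (i : Fin 2) :
    evR v (MvPolynomial.X i) = v i := by simp [evR]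

lemma evR_unique {A : Type u} [CommRing A]
    (f : MvPolynomial (Fin 2) (ULift.{u} ℤ) →+* A) : f = evR (fun i => f (PX i)) := by
  apply MvPolynomial.ringHom_ext
  · intro r
    have h1 := zc_unique (f.comp MvPolynomial.C)
    have := RingHom.congr_fun h1 r
    simpa [evR] using this
  · intro i; simp

lemma map_evR {A B : Type u} [CommRing A] [CommRing B] (φ : A →+* B) (v : Fin 2 → A) :
    φ.comp (evR v) = evR (fun i => φ (v i)) := by
  rw [evR_unique (φ.comp (evR v))]; simp

lemma evR_smul {A : Type u} [CommRing A] (u : A) (v : Fin 2 → A) (n : ℕ)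
    (f : MvPolynomial (Fin 2) (ULift.{u} ℤ)) (hf : f ∈ gr n) :
    evR (fun i => u * v i) f = u ^ n * evR v f := by
  have hf' : f.IsHomogeneous n := hf
  simp only [evR, MvPolynomial.coe_eval₂Hom, MvPolynomial.eval₂_eq', Finset.mul_sum]
  refine Finset.sum_congr rfl fun d hd => ?_
  have h : ∑ i, d i = n := by
    have := hf' (MvPolynomial.mem_support_iff.mp hd)
    rw [← this, Finsupp.weight_apply, Finsupp.sum_fintype] <;> simp
  simp only [mul_pow, Finset.prod_mul_distrib, Finset.prod_pow_eq_pow_sum, h]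
  ring

/-- the inclusion in the localization -/
def vh (f : MvPolynomial (Fin 2) (ULift.{u} ℤ)) : Away gr.{u} f →+* Localization.Away f where
  toFun := val
  map_one' := val_one
  map_mul' := val_mul
  map_zero' := val_zero
  map_add' := val_add

lemma vh_apply (f : MvPolynomial (Fin 2) (ULift.{u} ℤ)) (x : Away gr.{u} f) : vh f x = x.val := rfl

/-- evaluation on the chart -/
def evA {A : Type u} [CommRing A] (i : Fin 2) (v : Fin 2 → A) (h : IsUnit (v i)) :
    Away gr.{u} (PX.{u} i) →+* A :=
  (IsLocalization.Away.lift (S := Localization.Away (PX.{u} i)) (PX.{u} i) (g := evR v) (by simpa using h)).comp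
    (vh (PX i))

lemma evA_mk {A : Type u} [CommRing A] (i : Fin 2) (v : Fin 2 → A) (h : IsUnit (v i))
    (n : ℕ) (f) (hf : f ∈ gr.{u} (n • 1)) :
    evA i v h (Away.mk gr.{u} (PX_mem i) n f hf) * (v i) ^ n = evR v f := by
  have : vh (PX i) (Away.mk gr.{u} (PX_mem i) n f hf)
    * algebraMap _ (Localization.Away (PX.{u} i)) (PX.{u} i ^ n) = algebraMap _ _ f := by
    change (Away.mk gr.{u} (PX_mem i) n f hf).val * _ = _
    rw [Away.val_mk, Localization.mk_eq_mk']
    exact IsLocalization.mk'_spec _ _ (⟨PX.{u} i ^ n, ⟨n, rfl⟩⟩ : Submonoid.powers (PX.{u} i))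
  have h2 := congrArg (IsLocalization.Away.lift (S := Localization.Away (PX.{u} i)) (PX.{u} i) (g := evR v) (by simpa using h)) this
  rw [map_mul, IsLocalization.Away.lift_eq, IsLocalization.Away.lift_eq] at h2
  rw [← h2]
  simp [evA]

/-- the coordinate `X j / X i`. -/
def co (i j : Fin 2) : Away gr.{u} (PX.{u} i) :=
  Away.mk gr.{u} (PX_mem i) 1 (PX j) (by simpa using PX_mem j)

lemma evA_co {A : Type u} [CommRing A] (i j : Fin 2) (v : Fin 2 → A) (h : IsUnit (v i)) :
    evA i v h (co i j) * v i = v j := by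
  have := evA_mk i v h 1 (PX j) (by simpa using PX_mem j)
  simpa [co] using this

lemma mk_eq (i : Fin 2) (n : ℕ) (f) (hf : f ∈ gr.{u} (n • 1)) :
    Away.mk gr.{u} (PX_mem i) n f hf = evR (co i) f := by
  have h : Function.Injective (vh (PX i)) :=
    fun a b hab => HomogeneousLocalization.val_injective _ hab
  apply h
  have e := RingHom.congr_fun (map_evR (vh (PX i)) (co i)) f
  simp only [RingHom.comp_apply] at e
  rw [e]
  set L := Localization.Away (PX.{u} i)
  set iv : L := Localization.mk 1 ⟨PX.{u} i, ⟨1, by simp⟩⟩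
  have e2 : (fun j => vh (PX i) (co i j)) = fun j => iv * algebraMap _ L (PX j) := by
    funext j
    rw [co, vh_apply, Away.val_mk, ← Localization.mk_one_eq_algebraMap, Localization.mk_mul]
    simp
  rw [e2, evR_smul iv _ n f (by simpa using hf), vh_apply, Away.val_mk]
  have e3 : evR (fun j => algebraMap _ L (PX j)) f = algebraMap _ L f := by
    rw [← map_evR (algebraMap _ L) PX]
    simp only [RingHom.comp_apply]
    have := evR_unique (RingHom.id (MvPolynomial (Fin 2) (ULift.{u} ℤ)))
    simp only [RingHom.id_apply] at this
    rw [← this]; rfl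
  rw [e3, Localization.mk_pow, ← Localization.mk_one_eq_algebraMap, Localization.mk_mul]
  simp
  rfl

lemma away_hom_eq {A : Type u} [CommRing A] (i : Fin 2) (f g : Away gr.{u} (PX.{u} i) →+* A)
    (h : ∀ j, f (co i j) = g (co i j)) : f = g := by
  ext x
  obtain ⟨n, a, ha, rfl⟩ := Away.mk_surjective gr.{u} (PX_mem i) x
  rw [mk_eq]
  have := map_evR f (co i)
  have h2 := map_evR g (co i)
  simp only [h] at this
  rw [← h2] at this
  exact RingHom.congr_fun this a

lemma co_self (i : Fin 2) : co.{u} i i = 1 := by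
  apply HomogeneousLocalization.val_injective
  rw [co, Away.val_mk]
  simp

/-- chart -/
def ch (i : Fin 2) : Spec (.of (Away gr.{u} (PX.{u} i))) ⟶ P1Z.{u} :=
  Proj.awayι gr.{u} (PX.{u} i) (PX_mem i) one_pos

instance (i : Fin 2) : IsOpenImmersion (ch.{u} i) :=
  inferInstanceAs (IsOpenImmersion (Proj.awayι gr.{u} (PX.{u} i) (PX_mem i) one_pos))

/-- the standard opens -/
def UU (i : Fin 2) : P1Z.{u}.Opens := Proj.basicOpen gr.{u} (PX.{u} i)

lemma range_ch (i : Fin 2) : Set.range (ch.{u} i) = UU.{u} i := by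
  have := Proj.opensRange_awayι gr.{u} (PX.{u} i) (PX_mem i) one_pos
  exact congrArg (fun U : P1Z.{u}.Opens => (U : Set P1Z.{u})) this

lemma UU_cover (x : P1Z.{u}) : ∃ i, x ∈ UU i := by
  have := Proj.iSup_basicOpen_eq_top' gr.{u} PX (fun i => ⟨1, PX_mem i⟩) (by
    rw [eq_top_iff]
    intro x _
    induction x using MvPolynomial.induction_on with
    | C a =>
      exact Subalgebra.algebraMap_mem _ (⟨MvPolynomial.C a, MvPolynomial.isHomogeneous_C _ a⟩ : gr.{u} 0)
    | add p q hp hq => exact add_mem (hp trivial) (hq trivial)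
    | mul_X p n hp => exact mul_mem (hp trivial) (Algebra.subset_adjoin ⟨n, rfl⟩))
  have h : x ∈ (⨆ i, Proj.basicOpen gr.{u} (PX.{u} i) : (Proj gr.{u}).Opens) := by rw [this]; trivial
  exact TopologicalSpace.Opens.mem_iSup.mp h

variable {A B : CommRingCat.{u}}

/-- the point of a chart -/
def pt (i : Fin 2) (v : Fin 2 → A) (h : IsUnit (v i)) : Spec A ⟶ P1Z.{u} :=
  Spec.map (CommRingCat.ofHom (evA i v h)) ≫ ch i

lemma pt_congr (i : Fin 2) (v w : Fin 2 → A) (h : IsUnit (v i)) (e : v = w) :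
    pt i v h = pt i w (e ▸ h) := by subst e; rfl

lemma evA_unique (i : Fin 2) (v : Fin 2 → A) (h : IsUnit (v i)) (f : Away gr.{u} (PX.{u} i) →+* A)
    (hf : ∀ j, f (co i j) * v i = v j) : f = evA i v h := by
  apply away_hom_eq
  intro j
  apply h.mul_right_cancel
  rw [hf, evA_co]

lemma pt_map (φ : A ⟶ B) (i : Fin 2) (v : Fin 2 → A) (h : IsUnit (v i)) :
    Spec.map φ ≫ pt i v h = pt i (fun j => φ.hom (v j)) (h.map φ.hom) := by
  rw [pt, pt, ← Spec.map_comp_assoc]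
  congr 2
  ext1
  refine evA_unique i _ (h.map φ.hom) _ ?_
  intro j
  simp only [CommRingCat.hom_comp, CommRingCat.hom_ofHom, RingHom.comp_apply]
  rw [← map_mul, evA_co]

lemma range_pt (i : Fin 2) (v : Fin 2 → A) (h : IsUnit (v i)) :
    Set.range (pt i v h) ⊆ UU.{u} i := by
  rw [← range_ch]
  rintro _ ⟨x, rfl⟩
  exact ⟨Spec.map (CommRingCat.ofHom (evA i v h)) x, by simp [pt]⟩

lemma exists_pt (i : Fin 2) (g : Spec A ⟶ P1Z.{u}) (hg : Set.range g ⊆ UU.{u} i) :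
    ∃ (v : Fin 2 → A) (h : v i = 1), g = pt i v (h ▸ isUnit_one) := by
  rw [← range_ch] at hg
  obtain ⟨φ, hφ⟩ := Spec.map_surjective (IsOpenImmersion.lift (ch i) g hg)
  refine ⟨fun j => φ.hom (co i j), ?_, ?_⟩
  · simp [co_self]
  · rw [pt, ← IsOpenImmersion.lift_fac (ch i) g hg, ← hφ]
    congr 2
    ext1
    refine evA_unique i _ (by rw [co_self]; simp) _ ?_
    intro j
    rw [co_self]
    simp

lemma pt_eq_same (i : Fin 2) (v w : Fin 2 → A) (hv : IsUnit (v i)) (hw : IsUnit (w i)) :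
    pt i v hv = pt i w hw ↔ v 0 * w 1 = v 1 * w 0 := by
  have key : pt i v hv = pt i w hw ↔ ∀ j, v j * w i = v i * w j := by
    rw [pt, pt, cancel_mono, Spec.map_inj]
    constructor
    · intro h j
      have h := RingHom.congr_fun (congrArg CommRingCat.Hom.hom h) (co i j)
      simp only [CommRingCat.hom_ofHom] at h
      rw [← evA_co i j v hv, ← evA_co i j w hw, h]; ring
    · intro h
      ext1
      refine evA_unique i _ hw _ ?_
      intro j
      apply hv.mul_right_cancel
      have := evA_co i j v hv
      simp only [CommRingCat.hom_ofHom]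
      linear_combination h j + w i * this
  rw [key, Fin.forall_fin_two]
  fin_cases i <;> simp only [Fin.zero_eta, Fin.mk_one] <;> grind

lemma pt_eq_both (v : Fin 2 → A) (h0 : IsUnit (v 0)) (h1 : IsUnit (v 1)) :
    pt 0 v h0 = pt 1 v h1 := by
  have e0 := Proj.SpecMap_awayMap_awayι gr.{u} (f := PX 0) (PX_mem 0) one_pos (g := PX 1) (PX_mem 1)
    (x := PX 0 * PX 1) rfl
  have e1 := Proj.SpecMap_awayMap_awayι gr.{u} (f := PX 1) (PX_mem 1) one_pos (g := PX 0) (PX_mem 0)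
    (x := PX 0 * PX 1) (mul_comm _ _)
  let F : Away gr.{u} (PX.{u} 0 * PX 1) →+* A :=
    (IsLocalization.Away.lift (S := Localization.Away (PX.{u} 0 * PX 1)) (PX.{u} 0 * PX 1)
      (g := evR v) (by simpa using And.intro h0 h1)).comp
    (vh (PX.{u} 0 * PX 1))
  have hF : ∀ a : Away gr.{u} (PX.{u} 0 * PX 1), ∀ p q, a.val * algebraMap _ _ p = algebraMap _ _ q →
      F a * evR v p = evR v q := by
    intro a p q h
    have := congrArg (IsLocalization.Away.lift (S := Localization.Away (PX.{u} 0 * PX 1)) (PX.{u} 0 * PX 1)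
      (g := evR v) (by simpa using And.intro h0 h1)) h
    rw [map_mul, IsLocalization.Away.lift_eq, IsLocalization.Away.lift_eq] at this
    exact this
  have k0 : F.comp (awayMap gr.{u} (PX_mem 1) (f := PX 0) (x := PX 0 * PX 1) rfl) = evA 0 v h0 := by
    apply evA_unique
    intro j
    have := hF (awayMap gr.{u} (PX_mem 1) (f := PX 0) (x := PX 0 * PX 1) rfl (co 0 j)) (PX 0) (PX j) (by
      rw [co, Away.mk, val_awayMap_mk, ← Localization.mk_one_eq_algebraMap, Localization.mk_mul,
        ← Localization.mk_one_eq_algebraMap, Localization.mk_eq_mk_iff, Localization.r_iff_exists]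
      use 1
      simp
      ring)
    simpa using this
  have k1 : F.comp (awayMap gr.{u} (PX_mem 0) (f := PX 1) (x := PX 0 * PX 1) (mul_comm _ _)) = evA 1 v h1 := by
    apply evA_unique
    intro j
    have := hF (awayMap gr.{u} (PX_mem 0) (f := PX 1) (x := PX 0 * PX 1) (mul_comm _ _) (co 1 j)) (PX 1) (PX j) (by
      rw [co, Away.mk, val_awayMap_mk, ← Localization.mk_one_eq_algebraMap, Localization.mk_mul,
        ← Localization.mk_one_eq_algebraMap, Localization.mk_eq_mk_iff, Localization.r_iff_exists]
      use 1
      simp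
      ring)
    simpa using this
  clear_value F
  rw [pt, pt, ← k0, ← k1, CommRingCat.ofHom_comp, CommRingCat.ofHom_comp, Spec.map_comp, Spec.map_comp,
    Category.assoc, Category.assoc]
  congr 1
  exact e0.trans e1.symm

lemma isUnit_of_range_pt (i j : Fin 2) (v : Fin 2 → A) (h : IsUnit (v i))
    (hr : Set.range (pt i v h) ⊆ UU.{u} j) : IsUnit (v j) := by
  rw [← evA_co i j v h]
  refine IsUnit.mul ?_ h
  have e := Proj.awayι_preimage_basicOpen gr.{u} (PX_mem i) one_pos (PX_mem j) one_pos
  by_contra hn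
  obtain ⟨m, hm, hmem⟩ := exists_max_ideal_of_mem_nonunits hn
  let x : Spec A := ⟨m, hm.isPrime⟩
  have hx : pt i v h x ∈ UU.{u} j := hr ⟨x, rfl⟩
  let y : Spec (.of (Away gr.{u} (PX.{u} i))) := Spec.map (CommRingCat.ofHom (evA i v h)) x
  have hy : y ∈ (Proj.awayι gr.{u} (PX.{u} i) (PX_mem i) one_pos) ⁻¹ᵁ Proj.basicOpen gr.{u} (PX j) := by
    have : pt i v h x = ch i y := by simp [pt, y]
    rw [this] at hx
    exact hx
  rw [e] at hy
  apply hy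
  change evA i v h _ ∈ m
  convert hmem using 2
  apply HomogeneousLocalization.val_injective
  simp [co, Away.isLocalizationElem]

lemma pt_eq_iff (i j : Fin 2) (v w : Fin 2 → A) (hv : IsUnit (v i)) (hw : IsUnit (w j)) :
    pt i v hv = pt j w hw ↔ v 0 * w 1 = v 1 * w 0 := by
  by_cases hij : i = j
  · subst hij; exact pt_eq_same _ _ _ _ _
  have key : ∀ h : IsUnit (v j), pt i v hv = pt j v h := by
    intro h
    fin_cases i <;> fin_cases j <;> simp_all
    · exact pt_eq_both _ _ _
    · exact (pt_eq_both _ _ _).symm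
  constructor
  · intro h
    have hj : IsUnit (v j) := isUnit_of_range_pt i j v hv (h ▸ range_pt j w hw)
    rwa [key hj, pt_eq_same] at h
  · intro h
    have hj : IsUnit (v j) := by
      fin_cases i <;> fin_cases j <;> simp_all
      · exact isUnit_of_mul_isUnit_left (h ▸ hv.mul hw)
      · exact isUnit_of_mul_isUnit_left (h ▸ hv.mul hw)
    rw [key hj, pt_eq_same]; exact h

/-- unimodular -/
def Uni {A : CommRingCat.{u}} (v : Fin 2 → A) : Prop := ∃ r s : A, r * v 0 + s * v 1 = 1

lemma Uni.map {v : Fin 2 → A} (h : Uni v) (φ : A ⟶ B) : Uni (fun j => φ.hom (v j)) := by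
  obtain ⟨r, s, h⟩ := h
  exact ⟨φ.hom r, φ.hom s, by rw [← map_mul, ← map_mul, ← map_add, h, map_one]⟩

lemma Uni.of_unit {v : Fin 2 → A} (i : Fin 2) (h : IsUnit (v i)) : Uni v := by
  obtain ⟨u, hu⟩ := h
  fin_cases i
  · exact ⟨↑u⁻¹, 0, by simp at hu; rw [← hu]; simp⟩
  · exact ⟨0, ↑u⁻¹, by simp at hu; rw [← hu]; simp⟩

lemma Uni.exists_unit {v w : Fin 2 → A} (hv : Uni v) (hw : Uni w) (h : v 0 * w 1 = v 1 * w 0) :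
    ∃ u : A, IsUnit u ∧ ∀ j, w j = u * v j := by
  obtain ⟨r, s, h1⟩ := hv
  obtain ⟨p, q, h2⟩ := hw
  have h3 : ∀ j, w j = (r * w 0 + s * w 1) * v j := by
    rw [Fin.forall_fin_two]
    constructor
    · linear_combination (-w 0) * h1 - s * h
    · linear_combination (-w 1) * h1 + r * h
  refine ⟨r * w 0 + s * w 1, ?_, h3⟩
  have a := h3 0
  have b := h3 1
  refine IsUnit.of_mul_eq_one (p * v 0 + q * v 1) ?_
  linear_combination h2 - p * a - q * b

/-- `g` is given by the homogeneous coordinates `v`. -/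
def Rep (g : Spec A ⟶ P1Z.{u}) (v : Fin 2 → A) : Prop :=
  Uni v ∧ ∀ (B : CommRingCat.{u}) (φ : A ⟶ B) (i : Fin 2) (h : IsUnit (φ.hom (v i))),
    Spec.map φ ≫ g = pt i (fun j => φ.hom (v j)) h

lemma Rep.map {g : Spec A ⟶ P1Z.{u}} {v : Fin 2 → A} (h : Rep g v) (φ : A ⟶ B) :
    Rep (Spec.map φ ≫ g) (fun j => φ.hom (v j)) := by
  refine ⟨h.1.map φ, fun C ψ i hi => ?_⟩
  rw [← Spec.map_comp_assoc]
  exact h.2 C (φ ≫ ψ) i hi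

lemma rep_pt (i : Fin 2) (v : Fin 2 → A) (h : IsUnit (v i)) : Rep (pt i v h) v := by
  refine ⟨Uni.of_unit i h, fun B φ j hj => ?_⟩
  rw [pt_map, pt_eq_iff]
  ring

/-- locality on affines -/
lemma eq_of_uni {v : Fin 2 → A} (hv : Uni v) {Y : Scheme.{u}} (g g' : Spec A ⟶ Y)
    (h : ∀ (B : CommRingCat.{u}) (φ : A ⟶ B) (i : Fin 2), IsUnit (φ.hom (v i)) →
      Spec.map φ ≫ g = Spec.map φ ≫ g') : g = g' := by
  apply Scheme.hom_ext_of_forall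
  intro x
  have : ∃ i, v i ∉ x.asIdeal := by
    by_contra! hc
    obtain ⟨r, s, h1⟩ := hv
    apply x.isPrime.ne_top
    rw [Ideal.eq_top_iff_one, ← h1]
    exact add_mem (Ideal.mul_mem_left _ _ (hc 0)) (Ideal.mul_mem_left _ _ (hc 1))
  obtain ⟨i, hi⟩ := this
  let φ : A ⟶ .of (Localization.Away (v i)) := CommRingCat.ofHom (algebraMap _ _)
  have e := h _ φ i (IsLocalization.Away.algebraMap_isUnit (v i))
  have : IsOpenImmersion (Spec.map φ) := inferInstance
  refine ⟨(Spec.map φ).opensRange, ?_, ?_⟩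
  · have : Set.range (Spec.map φ) = (PrimeSpectrum.basicOpen (v i) : Set (PrimeSpectrum A)) :=
      PrimeSpectrum.localization_away_comap_range (Localization.Away (v i)) (v i)
    change x ∈ Set.range (Spec.map φ)
    rw [this]
    exact hi
  · rw [← cancel_epi (Spec.map φ).isoOpensRange.hom]
    simpa using e

lemma Rep.unique {g g' : Spec A ⟶ P1Z.{u}} {v : Fin 2 → A} (h : Rep g v) (h' : Rep g' v) : g = g' :=
  eq_of_uni h.1 _ _ fun B φ i hi => (h.2 B φ i hi).trans (h'.2 B φ i hi).symm

lemma uni_zero {v : Fin 2 → A} (hv : Uni v) (a : A)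
    (h : ∀ (B : CommRingCat.{u}) (φ : A ⟶ B) (i : Fin 2), IsUnit (φ.hom (v i)) → φ.hom a = 0) :
    a = 0 := by
  have key : ∀ i, ∃ n : ℕ, v i ^ n * a = 0 := by
    intro i
    have := h (.of (Localization.Away (v i))) (CommRingCat.ofHom (algebraMap _ _)) i
      (IsLocalization.Away.algebraMap_isUnit (v i))
    have := (IsLocalization.map_eq_zero_iff (Submonoid.powers (v i)) (Localization.Away (v i)) a).mp this
    obtain ⟨⟨_, n, rfl⟩, hn⟩ := this
    exact ⟨n, hn⟩
  obtain ⟨n, hn⟩ := key 0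
  obtain ⟨m, hm⟩ := key 1
  obtain ⟨r, s, h1⟩ := hv
  have hc : IsCoprime (v 0 ^ n) (v 1 ^ m) := IsCoprime.pow ⟨r, s, h1⟩
  obtain ⟨p, q, hpq⟩ := hc
  linear_combination (-a) * hpq + p * hn + q * hm

lemma Rep.cross {g : Spec A ⟶ P1Z.{u}} {v w : Fin 2 → A} (h : Rep g v) (h' : Rep g w) :
    v 0 * w 1 = v 1 * w 0 := by
  rw [← sub_eq_zero]
  apply uni_zero h.1
  intro B φ i hi
  apply uni_zero (h'.1.map φ)
  intro C ψ j hj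
  have e1 := h.2 C (φ ≫ ψ) i (hi.map ψ.hom)
  have e2 := h'.2 C (φ ≫ ψ) j hj
  rw [e1, pt_eq_iff] at e2
  simp only [CommRingCat.hom_comp, RingHom.comp_apply] at e2
  simp [e2]

lemma Rep.exists_unit {g : Spec A ⟶ P1Z.{u}} {v w : Fin 2 → A} (h : Rep g v) (h' : Rep g w) :
    ∃ u : A, IsUnit u ∧ ∀ j, w j = u * v j :=
  h.1.exists_unit h'.1 (h.cross h')

lemma Rep.of_cross {g : Spec A ⟶ P1Z.{u}} {v w : Fin 2 → A} (h : Rep g v) (hw : Uni w)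
    (e : v 0 * w 1 = v 1 * w 0) : Rep g w := by
  refine ⟨hw, fun B φ i hi => ?_⟩
  apply eq_of_uni (h.1.map φ)
  intro C ψ j hj
  have := h.2 C (φ ≫ ψ) j hj
  rw [← Spec.map_comp_assoc, this, pt_map, pt_eq_iff]
  simp only [CommRingCat.hom_comp, RingHom.comp_apply]
  rw [← map_mul, ← map_mul, ← map_mul, ← map_mul, e]

lemma Rep.range {g : Spec A ⟶ P1Z.{u}} {v : Fin 2 → A} (h : Rep g v) (i : Fin 2) :
    Set.range g ⊆ UU.{u} i ↔ IsUnit (v i) := by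
  constructor
  · intro hr
    obtain ⟨w, hw, rfl⟩ := exists_pt i g hr
    obtain ⟨u, hu, e⟩ := (rep_pt i w (hw ▸ isUnit_one)).exists_unit h
    rw [e, hw]; simpa using hu
  · intro hu
    have := h.2 A (𝟙 A) i (by simpa using hu)
    simp only [Spec.map_id, Category.id_comp] at this
    rw [this]
    exact range_pt _ _ _

lemma exists_rep (i : Fin 2) (g : Spec A ⟶ P1Z.{u}) (hg : Set.range g ⊆ UU.{u} i) :
    ∃ (v : Fin 2 → A), v i = 1 ∧ Rep g v := by
  obtain ⟨w, hw, rfl⟩ := exists_pt i g hg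
  exact ⟨w, hw, rep_pt _ _ _⟩

/-- local property -/
def Loc (X : Scheme.{u}) (Q : ∀ A : CommRingCat.{u}, (Spec A ⟶ X) → Prop) : Prop :=
  ∀ x : X, ∃ U : X.Opens, x ∈ U ∧ ∀ A (t : Spec A ⟶ X), Set.range t ⊆ U → Q A t

lemma Loc.and {X : Scheme.{u}} {Q Q' : ∀ A : CommRingCat.{u}, (Spec A ⟶ X) → Prop}
    (h : Loc X Q) (h' : Loc X Q') : Loc X (fun A t => Q A t ∧ Q' A t) := by
  intro x
  obtain ⟨U, hx, hU⟩ := h x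
  obtain ⟨V, hx', hV⟩ := h' x
  exact ⟨U ⊓ V, ⟨hx, hx'⟩, fun A t ht =>
    ⟨hU A t fun y hy => (ht hy).1, hV A t fun y hy => (ht hy).2⟩⟩

lemma Loc.imp {X : Scheme.{u}} {Q Q' : ∀ A : CommRingCat.{u}, (Spec A ⟶ X) → Prop}
    (h : Loc X Q) (h' : ∀ A t, Q A t → Q' A t) : Loc X Q' := by
  intro x
  obtain ⟨U, hx, hU⟩ := h x
  exact ⟨U, hx, fun A t ht => h' A t (hU A t ht)⟩

lemma Loc.comp {X Y : Scheme.{u}} {Q : ∀ A : CommRingCat.{u}, (Spec A ⟶ Y) → Prop}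
    (h : Loc Y Q) (f : X ⟶ Y) : Loc X (fun A t => Q A (t ≫ f)) := by
  intro x
  obtain ⟨U, hx, hU⟩ := h (f x)
  refine ⟨f ⁻¹ᵁ U, hx, fun A t ht => hU A _ ?_⟩
  rintro _ ⟨y, rfl⟩
  have := ht ⟨y, rfl⟩
  simpa using this

lemma Loc.ext {X Y : Scheme.{u}} (f g : X ⟶ Y)
    (h : Loc X (fun A t => t ≫ f = t ≫ g)) : f = g := by
  apply Scheme.hom_ext_of_forall
  intro x
  obtain ⟨U, hx, hU⟩ := h x
  obtain ⟨R, t, ht, hxt, htU⟩ := Scheme.exists_affine_mem_range_and_range_subset hx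
  refine ⟨t.opensRange, hxt, ?_⟩
  rw [← cancel_epi t.isoOpensRange.hom]
  simpa using hU _ t htU

lemma ext_all {X Y : Scheme.{u}} (f g : X ⟶ Y)
    (h : ∀ (A : CommRingCat.{u}) (t : Spec A ⟶ X), t ≫ f = t ≫ g) : f = g :=
  Loc.ext f g fun x => ⟨⊤, trivial, fun A t _ => h A t⟩

lemma glue {X Y : Scheme.{u}} (P : ∀ A : CommRingCat.{u}, (Spec A ⟶ X) → (Spec A ⟶ Y) → Prop)
    (hbc : ∀ {A B : CommRingCat.{u}} (φ : A ⟶ B) t h, P A t h → P B (Spec.map φ ≫ t) (Spec.map φ ≫ h))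
    (uniq : ∀ A t h h', P A t h → P A t h' → h = h')
    (loc : Loc X (fun A t => ∃ h, P A t h)) :
    ∃ H : X ⟶ Y, ∀ A t h, P A t h → t ≫ H = h := by
  have : ∀ x : X, ∃ (R : CommRingCat.{u}) (t : Spec R ⟶ X) (h : Spec R ⟶ Y), IsOpenImmersion t ∧
      x ∈ Set.range t ∧ P R t h := by
    intro x
    obtain ⟨U, hx, hU⟩ := loc x
    obtain ⟨R, t, ht, hxt, htU⟩ := Scheme.exists_affine_mem_range_and_range_subset hx
    obtain ⟨h, hh⟩ := hU _ t htU
    exact ⟨R, t, h, ht, hxt, hh⟩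
  choose R t h ho hx hP using this
  let 𝒰 : X.OpenCover := {
    I₀ := X, X i := Spec (R i), f i := t i,
    mem₀ := by
      rw [Scheme.presieve₀_mem_precoverage_iff]
      exact ⟨fun x ↦ ⟨x, hx x⟩, ho⟩ }
  have comm : ∀ {A B C : CommRingCat.{u}} (a : Spec C ⟶ Spec A) (b : Spec C ⟶ Spec B) t t' h h',
      P A t h → P B t' h' → a ≫ t = b ≫ t' → a ≫ h = b ≫ h' := by
    intro A B C a b t t' h h' p p' e
    obtain ⟨φ, rfl⟩ := Spec.map_surjective a
    obtain ⟨ψ, rfl⟩ := Spec.map_surjective b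
    have q := hbc φ _ _ p
    rw [e] at q
    exact uniq _ _ _ _ q (hbc ψ _ _ p')
  let H : X ⟶ Y := 𝒰.glueMorphisms h (by
    intro x y
    apply ext_all
    intro A s
    rw [← Category.assoc, ← Category.assoc]
    refine comm _ _ _ _ _ _ (hP x) (hP y) ?_
    rw [Category.assoc, Category.assoc]
    exact congrArg _ pullback.condition)
  have hH : ∀ x, t x ≫ H = h x := fun x => 𝒰.ι_glueMorphisms _ _ x
  refine ⟨H, fun A s k hk => ?_⟩
  have fin : ∀ (x : X) (B : CommRingCat.{u}) (r : Spec B ⟶ pullback s (t x)),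
      r ≫ pullback.fst s (t x) ≫ s ≫ H = r ≫ pullback.fst s (t x) ≫ k := by
    intro x B r
    rw [pullback.condition_assoc, hH]
    rw [← Category.assoc, ← Category.assoc]
    refine comm _ _ _ _ _ _ (hP x) hk ?_
    rw [Category.assoc, Category.assoc, pullback.condition]
  apply Scheme.Cover.hom_ext (𝒰.pullback₁ s)
  intro x
  apply ext_all
  intro B r
  exact fin x B r

lemma loc_rep : Loc P1Z.{u} (fun A t => ∃ v, Rep t v) := by
  intro x
  obtain ⟨i, hi⟩ := UU_cover x
  refine ⟨UU i, hi, fun A t ht => ?_⟩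
  obtain ⟨v, -, h⟩ := exists_rep i t ht
  exact ⟨v, h⟩

lemma rep_exists (v : Fin 2 → A) (hv : Uni v) : ∃ g : Spec A ⟶ P1Z.{u}, Rep g v := by
  obtain ⟨H, hH⟩ := glue (X := Spec A) (Y := P1Z.{u})
    (fun B t h => ∀ φ : A ⟶ B, Spec.map φ = t → Rep h (fun j => φ.hom (v j)))
    (by
      intro B C φ t h hh ψ hψ
      obtain ⟨θ, rfl⟩ := Spec.map_surjective t
      have := (hh θ rfl).map φ
      rw [← Spec.map_comp] at hψ
      rw [Spec.map_injective hψ]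
      exact this)
    (by
      intro B t h h' p p'
      obtain ⟨θ, rfl⟩ := Spec.map_surjective t
      exact (p _ rfl).unique (p' _ rfl))
    (by
      intro x
      have : ∃ i, v i ∉ x.asIdeal := by
        by_contra! hc
        obtain ⟨r, s, h1⟩ := hv
        apply x.isPrime.ne_top
        rw [Ideal.eq_top_iff_one, ← h1]
        exact add_mem (Ideal.mul_mem_left _ _ (hc 0)) (Ideal.mul_mem_left _ _ (hc 1))
      obtain ⟨i, hi⟩ := this
      refine ⟨PrimeSpectrum.basicOpen (v i), hi, ?_⟩
      intro B t ht
      obtain ⟨θ, rfl⟩ := Spec.map_surjective t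
      have hu : IsUnit (θ.hom (v i)) := by
        by_contra hn
        obtain ⟨m, hm, hmem⟩ := exists_max_ideal_of_mem_nonunits hn
        exact ht ⟨(⟨m, hm.isPrime⟩ : PrimeSpectrum B), rfl⟩ hmem
      refine ⟨pt i (fun j => θ.hom (v j)) hu, fun φ hφ => ?_⟩
      rw [Spec.map_injective hφ]
      exact rep_pt _ _ _)
  refine ⟨H, hv, fun B φ i h => ?_⟩
  apply hH
  intro ψ hψ
  rw [Spec.map_injective hψ]
  exact rep_pt _ _ _

/-- second projection -/
def P1snd (S : Scheme.{u}) : P1 S ⟶ P1Z.{u} := pullback.snd (terminal.from S) (terminal.from P1Z)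

lemma P1ext {S X : Scheme.{u}} (f g : X ⟶ P1 S) (h1 : f ≫ P1proj S = g ≫ P1proj S)
    (h2 : f ≫ P1snd S = g ≫ P1snd S) : f = g := pullback.hom_ext h1 h2

/-- lift -/
def P1lift {S X : Scheme.{u}} (a : X ⟶ S) (b : X ⟶ P1Z.{u}) : X ⟶ P1 S :=
  pullback.lift a b (Subsingleton.elim _ _)

@[simp] lemma P1lift_proj {S X : Scheme.{u}} (a : X ⟶ S) (b : X ⟶ P1Z.{u}) :
    P1lift a b ≫ P1proj S = a := pullback.lift_fst _ _ _

@[simp] lemma P1lift_snd {S X : Scheme.{u}} (a : X ⟶ S) (b : X ⟶ P1Z.{u}) :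
    P1lift a b ≫ P1snd S = b := pullback.lift_snd _ _ _

/-- matrix action -/
def act (N : Fin 2 → Fin 2 → A) (v : Fin 2 → A) : Fin 2 → A := fun j => N j 0 * v 0 + N j 1 * v 1

/-- determinant -/
def dt (N : Fin 2 → Fin 2 → A) : A := N 0 0 * N 1 1 - N 0 1 * N 1 0

/-- adjugate -/
def adj (N : Fin 2 → Fin 2 → A) : Fin 2 → Fin 2 → A := ![![N 1 1, - N 0 1], ![- N 1 0, N 0 0]]

lemma dt_adj (N : Fin 2 → Fin 2 → A) : dt (adj N) = dt N := by
  simp [dt, adj]; ring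

lemma uni_act {N : Fin 2 → Fin 2 → A} {v : Fin 2 → A} (hN : IsUnit (dt N)) (hv : Uni v) :
    Uni (act N v) := by
  obtain ⟨r, s, h⟩ := hv
  obtain ⟨d, hd⟩ := hN.exists_left_inv
  refine ⟨d * (r * N 1 1 - s * N 1 0), d * (- r * N 0 1 + s * N 0 0), ?_⟩
  simp only [act, dt] at *
  linear_combination (r * v 0 + s * v 1) * hd + h

lemma act_map (φ : A ⟶ B) (N : Fin 2 → Fin 2 → A) (v : Fin 2 → A) :
    (fun j => φ.hom (act N v j)) = act (fun i j => φ.hom (N i j)) (fun j => φ.hom (v j)) := by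
  funext j; simp [act]

lemma dt_map (φ : A ⟶ B) (N : Fin 2 → Fin 2 → A) :
    φ.hom (dt N) = dt (fun i j => φ.hom (N i j)) := by
  simp [dt]

lemma adj_map (φ : A ⟶ B) (N : Fin 2 → Fin 2 → A) :
    (fun i j => φ.hom (adj N i j)) = adj (fun i j => φ.hom (N i j)) := by
  funext i j
  fin_cases i <;> fin_cases j <;> simp [adj]

/-- a compatible family of matrices -/
structure Fam (S : Scheme.{u})
    (M : ∀ A : CommRingCat.{u}, (Spec A ⟶ S) → (Fin 2 → Fin 2 → A) → Prop) : Prop where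
  bc : ∀ {A B : CommRingCat.{u}} (φ : A ⟶ B) t N, M A t N →
    M B (Spec.map φ ≫ t) (fun i j => φ.hom (N i j))
  det : ∀ {A} t N, M A t N → IsUnit (dt N)
  prop : ∀ {A} t N N', M A t N → M A t N' → ∃ u : A, IsUnit u ∧ ∀ i j, N' i j = u * N i j
  loc : Loc S (fun A t => ∃ N, M A t N)

lemma Fam.adj {S : Scheme.{u}}
    {M : ∀ A : CommRingCat.{u}, (Spec A ⟶ S) → (Fin 2 → Fin 2 → A) → Prop} (h : Fam S M) :
    Fam S (fun A t N => ∃ N', M A t N' ∧ N = P1Aux.adj N') where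
  bc := by
    rintro A B φ t _ ⟨N, hN, rfl⟩
    exact ⟨_, h.bc φ t N hN, adj_map φ N⟩
  det := by
    rintro A t _ ⟨N, hN, rfl⟩
    rw [dt_adj]; exact h.det t N hN
  prop := by
    rintro A t _ _ ⟨N, hN, rfl⟩ ⟨N', hN', rfl⟩
    obtain ⟨u, hu, e⟩ := h.prop t N N' hN hN'
    refine ⟨u, hu, fun i j => ?_⟩
    fin_cases i <;> fin_cases j <;> simp [P1Aux.adj, e]
  loc := h.loc.imp fun A t ⟨N, hN⟩ => ⟨_, N, hN, rfl⟩

lemma Fam.exists_map {S : Scheme.{u}}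
    {M : ∀ A : CommRingCat.{u}, (Spec A ⟶ S) → (Fin 2 → Fin 2 → A) → Prop} (h : Fam S M) :
    ∃ β : P1 S ⟶ P1 S, β ≫ P1proj S = P1proj S ∧
      ∀ (A : CommRingCat.{u}) (t : Spec A ⟶ P1 S) N v, M A (t ≫ P1proj S) N → Rep (t ≫ P1snd S) v →
        Rep (t ≫ β ≫ P1snd S) (act N v) := by
  obtain ⟨H, hH⟩ := glue (X := P1 S) (Y := P1Z.{u})
    (fun A t h => ∃ N v, M A (t ≫ P1proj S) N ∧ Rep (t ≫ P1snd S) v ∧ Rep h (act N v))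
    (by
      rintro A B φ t k ⟨N, v, hN, hv, hk⟩
      refine ⟨fun i j => φ.hom (N i j), fun j => φ.hom (v j), ?_, ?_, ?_⟩
      · rw [Category.assoc]; exact h.bc φ _ _ hN
      · rw [Category.assoc]; exact hv.map φ
      · rw [← act_map]; exact hk.map φ)
    (by
      rintro A t k k' ⟨N, v, hN, hv, hk⟩ ⟨N', v', hN', hv', hk'⟩
      obtain ⟨u, hu, e⟩ := h.prop _ _ _ hN hN'
      obtain ⟨w, hw, e'⟩ := hv.exists_unit hv'
      refine hk.unique (hk'.of_cross hk.1 ?_)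
      simp only [act, e, e']
      ring)
    (by
      refine ((h.loc.comp (P1proj S)).and (loc_rep.comp (P1snd S))).imp ?_
      rintro A t ⟨⟨N, hN⟩, v, hv⟩
      obtain ⟨g, hg⟩ := rep_exists (act N v) (uni_act (h.det _ _ hN) hv.1)
      exact ⟨g, N, v, hN, hv, hg⟩)
  refine ⟨P1lift (P1proj S) H, by simp, ?_⟩
  intro A t N v hN hv
  obtain ⟨g, hg⟩ := rep_exists (act N v) (uni_act (h.det _ _ hN) hv.1)
  have := hH A t g ⟨N, v, hN, hv, hg⟩
  simpa [this] using hg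

lemma Fam.exists_iso {S : Scheme.{u}}
    {M : ∀ A : CommRingCat.{u}, (Spec A ⟶ S) → (Fin 2 → Fin 2 → A) → Prop} (h : Fam S M) :
    ∃ β : P1 S ⟶ P1 S, IsIso β ∧ β ≫ P1proj S = P1proj S ∧
      ∀ (A : CommRingCat.{u}) (t : Spec A ⟶ P1 S) N v, M A (t ≫ P1proj S) N → Rep (t ≫ P1snd S) v →
        Rep (t ≫ β ≫ P1snd S) (act N v) := by
  obtain ⟨β, hβ, e⟩ := h.exists_map
  obtain ⟨γ, hγ, e'⟩ := h.adj.exists_map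
  refine ⟨β, ⟨γ, ?_, ?_⟩, hβ, e⟩
  · apply Loc.ext
    refine ((h.loc.comp (P1proj S)).and (loc_rep.comp (P1snd S))).imp ?_
    rintro A t ⟨⟨N, hN⟩, v, hv⟩
    apply P1ext
    · simp [hβ, hγ]
    · have h1 := e A t N v hN hv
      have h2 := e' A (t ≫ β) (P1Aux.adj N) (act N v) ⟨N, by simpa [hβ] using hN, rfl⟩ (by simpa using h1)
      have h3 := h2.of_cross hv.1 (by simp [act, P1Aux.adj]; ring)
      have := h3.unique hv
      simpa using this
  · apply Loc.ext
    refine ((h.loc.comp (P1proj S)).and (loc_rep.comp (P1snd S))).imp ?_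
    rintro A t ⟨⟨N, hN⟩, v, hv⟩
    apply P1ext
    · simp [hβ, hγ]
    · have h1 := e' A t (P1Aux.adj N) v ⟨N, hN, rfl⟩ hv
      have h2 := e A (t ≫ γ) N _ (by simpa [hγ] using hN) (by simpa using h1)
      have h3 := h2.of_cross hv.1 (by simp [act, P1Aux.adj]; ring)
      have := h3.unique hv
      simpa using this

/-- the standard coordinates -/
def ee (R : Type u) [CommRing R] (k : Fin 3) : Fin 2 → R :=
  (![![1, 0], ![0, 1], ![1, 1]] : Fin 3 → Fin 2 → R) k

lemma ee_map (φ : A ⟶ B) (k : Fin 3) : (fun j => φ.hom (ee A k j)) = ee B k := by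
  funext j
  fin_cases k <;> fin_cases j <;> simp [ee]

lemma ee_uni (k : Fin 3) : Uni (ee A k) := by
  fin_cases k
  · exact ⟨1, 0, by simp [ee]⟩
  · exact ⟨0, 1, by simp [ee]⟩
  · exact ⟨1, 0, by simp [ee]⟩

lemma exists_std (S : Scheme.{u}) : ∃ σ : Fin 3 → (S ⟶ P1Z.{u}),
    ∀ (A : CommRingCat.{u}) (t : Spec A ⟶ S) k, Rep (t ≫ σ k) (ee A k) := by
  have : ∀ k, ∃ σ : S ⟶ P1Z.{u}, ∀ (A : CommRingCat.{u}) (t : Spec A ⟶ S), Rep (t ≫ σ) (ee A k) := by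
    intro k
    obtain ⟨g, hg⟩ := rep_exists (A := .of (ULift.{u} ℤ)) (ee _ k) (ee_uni k)
    refine ⟨specULiftZIsTerminal.from S ≫ g, fun A t => ?_⟩
    obtain ⟨φ, hφ⟩ := Spec.map_surjective (t ≫ specULiftZIsTerminal.from S)
    rw [← Category.assoc, ← hφ, ← ee_map φ]
    exact hg.map φ
  choose σ h using this
  exact ⟨σ, fun A t k => h k A t⟩

/-- frames -/
def Fr {S : Scheme.{u}} (f : Fin 3 → (S ⟶ P1Z.{u})) (A : CommRingCat.{u}) (t : Spec A ⟶ S)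
    (N : Fin 2 → Fin 2 → A) : Prop :=
  IsUnit (dt N) ∧ ∀ k, Rep (t ≫ f k) (act N (ee A k))

lemma cross_unit {S : Scheme.{u}} (s s' : S ⟶ P1 S) (hs : s ≫ P1proj S = 𝟙 S)
    (hs' : s' ≫ P1proj S = 𝟙 S) (hd : Disjoint (Set.range s.base) (Set.range s'.base))
    (t : Spec A ⟶ S) (v w : Fin 2 → A) (hv : Rep (t ≫ s ≫ P1snd S) v)
    (hw : Rep (t ≫ s' ≫ P1snd S) w) : IsUnit (v 0 * w 1 - v 1 * w 0) := by
  by_contra hn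
  obtain ⟨m, hm, hmem⟩ := exists_max_ideal_of_mem_nonunits hn
  let φ : A ⟶ .of (A ⧸ m) := CommRingCat.ofHom (Ideal.Quotient.mk m)
  have h1 := hv.map φ
  have h2 := hw.map φ
  have e : φ.hom (v 0) * φ.hom (w 1) = φ.hom (v 1) * φ.hom (w 0) := by
    rw [← sub_eq_zero, ← map_mul, ← map_mul, ← map_sub]
    exact Ideal.Quotient.eq_zero_iff_mem.mpr hmem
  have h3 := (h1.of_cross h2.1 e).unique h2
  have h4 : Spec.map φ ≫ t ≫ s = Spec.map φ ≫ t ≫ s' := by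
    apply P1ext
    · simp [hs, hs']
    · simpa using h3
  have : Nontrivial (A ⧸ m) := Ideal.Quotient.nontrivial_iff.mpr hm.ne_top
  obtain ⟨x⟩ : Nonempty (PrimeSpectrum (A ⧸ m)) := inferInstance
  let y : Spec (.of (A ⧸ m)) := x
  have h5 : (Spec.map φ ≫ t ≫ s) y = (Spec.map φ ≫ t ≫ s') y := by rw [h4]
  simp only [Scheme.Hom.comp_apply] at h5
  exact Set.disjoint_left.mp hd ⟨t (Spec.map φ y), rfl⟩ ⟨t (Spec.map φ y), h5.symm⟩

lemma fam_frame {S : Scheme.{u}} (s : Fin 3 → (S ⟶ P1 S)) (hs : ∀ i, s i ≫ P1proj S = 𝟙 S)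
    (hdisj : ∀ i j : Fin 3, i ≠ j →
      Disjoint (Set.range (s i).base) (Set.range (s j).base)) :
    Fam S (Fr (fun k => s k ≫ P1snd S)) where
  bc := by
    rintro A B φ t N ⟨h1, h2⟩
    refine ⟨by rw [← dt_map]; exact h1.map φ.hom, fun k => ?_⟩
    rw [← ee_map φ, ← act_map, Category.assoc]
    exact (h2 k).map φ
  det := fun t N h => h.1
  prop := by
    rintro A t N N' ⟨h1, h2⟩ ⟨h1', h2'⟩
    obtain ⟨a, ha, ea⟩ := (h2 0).exists_unit (h2' 0)
    obtain ⟨b, hb, eb⟩ := (h2 1).exists_unit (h2' 1)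
    obtain ⟨c, hc, ec⟩ := (h2 2).exists_unit (h2' 2)
    simp [act, ee] at ea eb ec
    obtain ⟨k0, k1⟩ := ec
    rw [ea.1, eb.1] at k0
    rw [ea.2, eb.2] at k1
    have hac : a = c := by
      apply h1.mul_right_cancel
      simp only [dt]
      linear_combination N 1 1 * k0 - N 0 1 * k1
    have hbc : b = c := by
      apply h1.mul_right_cancel
      simp only [dt]
      linear_combination N 0 0 * k1 - N 1 0 * k0
    refine ⟨c, hc, fun i j => ?_⟩
    fin_cases i <;> fin_cases j
    · simpa [hac] using ea.1
    · simpa [hbc] using eb.1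
    · simpa [hac] using ea.2
    · simpa [hbc] using eb.2
  loc := by
    refine (((loc_rep.comp (s 0 ≫ P1snd S)).and (loc_rep.comp (s 1 ≫ P1snd S))).and
      (loc_rep.comp (s 2 ≫ P1snd S))).imp ?_
    rintro A t ⟨⟨⟨v, hv⟩, w, hw⟩, z, hz⟩
    have d01 := cross_unit _ _ (hs 0) (hs 1) (hdisj 0 1 (by decide)) t v w hv hw
    have d02 := cross_unit _ _ (hs 0) (hs 2) (hdisj 0 2 (by decide)) t v z hv hz
    have d21 := cross_unit _ _ (hs 2) (hs 1) (hdisj 2 1 (by decide)) t z w hz hw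
    let p := z 0 * w 1 - z 1 * w 0
    let q := v 0 * z 1 - v 1 * z 0
    let N : Fin 2 → Fin 2 → A := fun i => ![p * v i, q * w i]
    have hN : IsUnit (dt N) := by
      have : dt N = p * q * (v 0 * w 1 - v 1 * w 0) := by simp [dt, N]; ring
      rw [this]
      exact (d21.mul d02).mul d01
    refine ⟨N, hN, fun k => ?_⟩
    have hu := uni_act hN (ee_uni k)
    fin_cases k
    · exact hv.of_cross hu (by simp [act, N, ee]; ring)
    · exact hw.of_cross hu (by simp [act, N, ee]; ring)
    · exact hz.of_cross hu (by simp [act, N, ee, p, q]; ring)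

lemma exists_beta {S : Scheme.{u}} (s σ : Fin 3 → (S ⟶ P1 S)) (hs : ∀ i, s i ≫ P1proj S = 𝟙 S)
    (hdisj : ∀ i j : Fin 3, i ≠ j →
      Disjoint (Set.range (s i).base) (Set.range (s j).base))
    (hσ : ∀ i, σ i ≫ P1proj S = 𝟙 S)
    (hσ' : ∀ (A : CommRingCat.{u}) (t : Spec A ⟶ S) k, Rep (t ≫ σ k ≫ P1snd S) (ee A k)) :
    ∃ β : P1 S ⟶ P1 S, IsIso β ∧ β ≫ P1proj S = P1proj S ∧ ∀ k, σ k ≫ β = s k := by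
  have F := fam_frame s hs hdisj
  obtain ⟨β, hβ, hp, e⟩ := F.exists_iso
  refine ⟨β, hβ, hp, fun k => ?_⟩
  apply Loc.ext
  refine F.loc.imp ?_
  rintro A t ⟨N, hN⟩
  have h1 := e A (t ≫ σ k) N (ee A k) (by simpa [hσ] using hN) (by simpa using hσ' A t k)
  have h2 := hN.2 k
  apply P1ext
  · simp [hp, hσ, hs]
  · simpa using h1.unique h2

open Polynomial in
lemma poly_rigid {R : Type u} [CommRing R] (p p' q : R[X]) (hp : p.eval 0 = 0) (hp' : p'.eval 0 = 0)
    (hq : q.eval 0 = 0) (hpp : p'.comp p = X) (h1 : p.eval 1 = 1)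
    (hL : toLaurent p * LaurentPolynomial.invert (toLaurent q) = 1) : p = X ∧ q = X := by
  have key : ∀ f : R[X], f.eval 0 = 0 → ∃ g, f = X * g := by
    intro f hf
    rw [← coeff_zero_eq_eval_zero] at hf
    exact X_dvd_iff.mpr hf
  obtain ⟨p1, rfl⟩ := key p hp
  obtain ⟨g, rfl⟩ := key p' hp'
  obtain ⟨q1, rfl⟩ := key q hq
  set h := g.comp (X * p1) with hh
  have e1 : p1 * h = 1 := by
    have : X * (p1 * h) = X * 1 := by
      rw [mul_comp, X_comp, ← hh] at hpp
      rw [mul_one, ← mul_assoc, hpp]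
    ext n
    have := congrArg (fun f : R[X] => f.coeff (n + 1)) this
    simpa only [coeff_X_mul] using this
  have e2 : toLaurent p1 * LaurentPolynomial.invert (toLaurent q1) = 1 := by
    have hT : (LaurentPolynomial.T 1 * LaurentPolynomial.T (-1) : LaurentPolynomial R) = 1 := by
      rw [← LaurentPolynomial.T_add]; simp
    simp only [map_mul, toLaurent_X, LaurentPolynomial.invert_T] at hL
    linear_combination hL - toLaurent p1 * LaurentPolynomial.invert (toLaurent q1) * hT
  have e3 : LaurentPolynomial.invert (toLaurent q1) = toLaurent h := by
    have e1' : toLaurent p1 * toLaurent h = 1 := by rw [← map_mul, e1, map_one]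
    linear_combination toLaurent h * e2 - LaurentPolynomial.invert (toLaurent q1) * e1'
  have e4 : h = C (h.coeff 0) := by
    ext n
    rcases n with _ | n
    · simp
    · rw [coeff_C_of_ne_zero (by omega)]
      have := congrArg (fun f : LaurentPolynomial R => f.coeff ((n + 1 : ℕ) : ℤ)) e3
      simp only [LaurentPolynomial.invert_apply, LaurentPolynomial.coeff_toLaurent] at this
      have a1 := Finsupp.mapDomain_apply (f := ((↑) : ℕ → ℤ)) Nat.cast_injective h.toFinsupp.coeff (n + 1)
      have a2 := Finsupp.mapDomain_of_notMem_range (f := ((↑) : ℕ → ℤ)) q1.toFinsupp.coeff (-((n + 1 : ℕ) : ℤ))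
        (by rintro ⟨m, hm⟩; omega)
      have a3 : h.coeff (n + 1) = h.toFinsupp.coeff (n + 1) := rfl
      rw [a3, ← a1, ← a2]
      exact this.symm
  have e5 : p1.eval 1 = 1 := by simpa using h1
  have e6 : h.coeff 0 = 1 := by
    have := congrArg (eval 1) e1
    rw [e4] at this
    simpa [e5] using this
  rw [e6, C_1] at e4
  rw [e4, mul_one] at e1
  rw [e4, map_one] at e3
  have e7 : q1 = 1 := by
    apply toLaurent_injective
    apply LaurentPolynomial.invert.injective
    rw [e3]; simp
  simp [e1, e7]

/-- chart coordinates -/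
def cv {R : Type u} [CommRing R] (i : Fin 2) (a : R) : Fin 2 → R :=
  (![![1, a], ![a, 1]] : Fin 2 → Fin 2 → R) i

lemma cv_self {R : Type u} [CommRing R] (i : Fin 2) (a : R) : cv i a i = 1 := by
  fin_cases i <;> rfl

lemma cv_map (φ : A ⟶ B) (i : Fin 2) (a : A) : (fun j => φ.hom (cv i a j)) = cv i (φ.hom a) := by
  funext j
  fin_cases i <;> fin_cases j <;> simp [cv]

lemma cv_uni (i : Fin 2) (a : A) : Uni (cv i a) := Uni.of_unit i (by rw [cv_self]; exact isUnit_one)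

lemma exists_cv (i : Fin 2) (g : Spec A ⟶ P1Z.{u}) (hg : Set.range g ⊆ UU.{u} i) :
    ∃ a, Rep g (cv i a) := by
  obtain ⟨v, h, hv⟩ := exists_rep i g hg
  refine ⟨v (1 - i), ?_⟩
  convert hv using 1
  funext j
  fin_cases i <;> fin_cases j <;> simp_all [cv]

lemma Rep.cv_inj {i : Fin 2} {g : Spec A ⟶ P1Z.{u}} {a b : A} (h : Rep g (cv i a))
    (h' : Rep g (cv i b)) : a = b := by
  have := h.cross h'
  fin_cases i
  · simpa [cv] using this.symm
  · simpa [cv] using this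

lemma Rep.cv_map {i : Fin 2} {g : Spec A ⟶ P1Z.{u}} {a : A} (h : Rep g (cv i a)) (φ : A ⟶ B) :
    Rep (Spec.map φ ≫ g) (cv i (φ.hom a)) := by
  rw [← P1Aux.cv_map]; exact h.map φ

/-- index of the section missing chart `i` -/
def far (i : Fin 2) : Fin 3 := (![1, 0] : Fin 2 → Fin 3) i

/-- index of the zero section of chart `i` -/
def near (i : Fin 2) : Fin 3 := (![0, 1] : Fin 2 → Fin 3) i

lemma mem_range_far {S : Scheme.{u}} (σ : Fin 3 → (S ⟶ P1 S)) (hσ : ∀ i, σ i ≫ P1proj S = 𝟙 S)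
    (hσ' : ∀ (A : CommRingCat.{u}) (t : Spec A ⟶ S) k, Rep (t ≫ σ k ≫ P1snd S) (ee A k))
    (i : Fin 2) (y : P1 S) (hy : P1snd S y ∉ UU.{u} i) : ∃ z, σ (far i) z = y := by
  let g := (P1 S).fromSpecResidueField y
  have hg : ∀ z, g z = y := fun z => Scheme.fromSpecResidueField_apply y z
  obtain ⟨j, hj⟩ := UU_cover (P1snd S y)
  obtain ⟨v, -, hv⟩ := exists_rep j (g ≫ P1snd S) (by
    rintro _ ⟨z, rfl⟩
    rw [Scheme.Hom.comp_apply, hg]; exact hj)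
  have hvi : ¬ IsUnit (v i) := by
    rw [← hv.range i]
    intro h
    have z : Spec ((P1 S).residueField y) := IsLocalRing.closedPoint _
    have := h ⟨z, rfl⟩
    rw [Scheme.Hom.comp_apply, hg] at this
    exact hy this
  have hv0 : v i = 0 := by
    by_contra h0
    exact hvi (IsUnit.mk0 _ h0)
  have h1 := hσ' _ (g ≫ P1proj S) (far i)
  have h2 : g ≫ P1snd S = (g ≫ P1proj S) ≫ σ (far i) ≫ P1snd S := by
    refine (hv.of_cross (ee_uni (far i)) ?_).unique h1
    fin_cases i
    · simp [far, ee] at hv0 ⊢; exact hv0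
    · simp [far, ee] at hv0 ⊢; exact hv0.symm
  have h3 : g = (g ≫ P1proj S) ≫ σ (far i) := by
    apply P1ext
    · simp [hσ]
    · simpa using h2
  let z : Spec ((P1 S).residueField y) := IsLocalRing.closedPoint _
  refine ⟨(g ≫ P1proj S) z, ?_⟩
  rw [← Scheme.Hom.comp_apply, ← h3, hg]

lemma far_notMem {S : Scheme.{u}} (σ : Fin 3 → (S ⟶ P1 S))
    (hσ' : ∀ (A : CommRingCat.{u}) (t : Spec A ⟶ S) k, Rep (t ≫ σ k ≫ P1snd S) (ee A k))
    (i : Fin 2) (z : S) : P1snd S (σ (far i) z) ∉ UU.{u} i := by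
  intro hz
  let g := S.fromSpecResidueField z
  have hg : ∀ x, g x = z := fun x => Scheme.fromSpecResidueField_apply z x
  have h1 := ((hσ' _ g (far i)).range i).mp (by
    rintro _ ⟨x, rfl⟩
    rw [Scheme.Hom.comp_apply, Scheme.Hom.comp_apply, hg]; exact hz)
  fin_cases i
  · simp [far, ee] at h1
  · simp [far, ee] at h1

lemma chart_stable {S : Scheme.{u}} (σ : Fin 3 → (S ⟶ P1 S)) (hσ : ∀ i, σ i ≫ P1proj S = 𝟙 S)
    (hσ' : ∀ (A : CommRingCat.{u}) (t : Spec A ⟶ S) k, Rep (t ≫ σ k ≫ P1snd S) (ee A k))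
    (γ : P1 S ⟶ P1 S) [IsIso γ] (hfix : ∀ k, σ k ≫ γ = σ k) (i : Fin 2) (t : Spec A ⟶ P1 S)
    (ht : Set.range (t ≫ P1snd S) ⊆ UU.{u} i) : Set.range (t ≫ γ ≫ P1snd S) ⊆ UU.{u} i := by
  rintro _ ⟨x, rfl⟩
  by_contra hn
  rw [Scheme.Hom.comp_apply, Scheme.Hom.comp_apply] at hn
  obtain ⟨z, hz⟩ := mem_range_far σ hσ hσ' i _ hn
  have h1 : γ (σ (far i) z) = γ (t x) := by
    rw [← Scheme.Hom.comp_apply, hfix, hz]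
  have h2 : (γ ≫ inv γ) (σ (far i) z) = (γ ≫ inv γ) (t x) := by
    rw [Scheme.Hom.comp_apply, Scheme.Hom.comp_apply, h1]
  rw [IsIso.hom_inv_id] at h2
  replace h2 : σ (far i) z = t x := by simpa using h2
  have h3 := ht ⟨x, rfl⟩
  rw [Scheme.Hom.comp_apply, ← h2] at h3
  exact far_notMem σ hσ' i z h3

/-- polynomial ring -/
abbrev PP (A : CommRingCat.{u}) : CommRingCat.{u} := .of (Polynomial A)

/-- constants -/
def cA (A : CommRingCat.{u}) : A ⟶ PP A := CommRingCat.ofHom Polynomial.C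

/-- evaluation -/
def evh (φ : A ⟶ B) (b : B) : PP A ⟶ B := CommRingCat.ofHom (Polynomial.eval₂RingHom φ.hom b)

lemma cA_evh (φ : A ⟶ B) (b : B) : cA A ≫ evh φ b = φ := by
  ext x; simp [cA, evh]

lemma evh_apply (φ : A ⟶ B) (b : B) (p : Polynomial A) : (evh φ b).hom p = p.eval₂ φ.hom b := rfl

/-- the universal point of a chart -/
def IsJ {S : Scheme.{u}} (i : Fin 2) (i₀ : Spec A ⟶ S) (j : Spec (PP A) ⟶ P1 S) : Prop :=
  j ≫ P1proj S = Spec.map (cA A) ≫ i₀ ∧ Rep (A := PP A) (j ≫ P1snd S) (cv i (Polynomial.X : Polynomial A))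

lemma exists_isJ {S : Scheme.{u}} (i : Fin 2) (i₀ : Spec A ⟶ S) : ∃ j, IsJ i i₀ j := by
  obtain ⟨g, hg⟩ := rep_exists (A := PP A) (cv i (Polynomial.X : Polynomial A)) (cv_uni (A := PP A) i _)
  exact ⟨P1lift (Spec.map (cA A) ≫ i₀) g, by simp, by simpa using hg⟩

lemma IsJ.ev {S : Scheme.{u}} {i : Fin 2} {i₀ : Spec A ⟶ S} {j : Spec (PP A) ⟶ P1 S} (h : IsJ i i₀ j)
    (φ : A ⟶ B) (b : B) (t : Spec B ⟶ P1 S) (ht : t ≫ P1proj S = Spec.map φ ≫ i₀)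
    (ht' : Rep (t ≫ P1snd S) (cv i b)) : Spec.map (evh φ b) ≫ j = t := by
  apply P1ext
  · rw [Category.assoc, h.1, ← Spec.map_comp_assoc, cA_evh, ht]
  · have h2 := h.2.cv_map (evh φ b)
    rw [evh_apply, Polynomial.eval₂_X] at h2
    rw [Category.assoc]
    exact h2.unique ht'

lemma IsJ.exists_poly {S : Scheme.{u}} (σ : Fin 3 → (S ⟶ P1 S)) (hσ : ∀ i, σ i ≫ P1proj S = 𝟙 S)
    (hσ' : ∀ (A : CommRingCat.{u}) (t : Spec A ⟶ S) k, Rep (t ≫ σ k ≫ P1snd S) (ee A k))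
    (γ : P1 S ⟶ P1 S) [IsIso γ] (hfix : ∀ k, σ k ≫ γ = σ k)
    {i : Fin 2} {i₀ : Spec A ⟶ S} {j : Spec (PP A) ⟶ P1 S} (h : IsJ i i₀ j) :
    ∃ p : Polynomial A, Rep (A := PP A) (j ≫ γ ≫ P1snd S) (cv i p) :=
  exists_cv (A := PP A) i _ (chart_stable σ hσ hσ' γ hfix i j
    ((h.2.range i).mpr (by rw [cv_self]; exact isUnit_one)))

lemma IsJ.eval_eq {S : Scheme.{u}} (σ : Fin 3 → (S ⟶ P1 S)) (hσ : ∀ i, σ i ≫ P1proj S = 𝟙 S)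
    (hσ' : ∀ (A : CommRingCat.{u}) (t : Spec A ⟶ S) k, Rep (t ≫ σ k ≫ P1snd S) (ee A k))
    (γ : P1 S ⟶ P1 S) (hfix : ∀ k, σ k ≫ γ = σ k)
    {i : Fin 2} {i₀ : Spec A ⟶ S} {j : Spec (PP A) ⟶ P1 S} (h : IsJ i i₀ j)
    {p : Polynomial A} (hp : Rep (A := PP A) (j ≫ γ ≫ P1snd S) (cv i p)) (k : Fin 3) (a : A)
    (hk : ee A k = cv i a) : p.eval a = a := by
  have h1 := hσ' A i₀ k
  rw [hk] at h1
  have h2 := h.ev (𝟙 A) a (i₀ ≫ σ k) (by simp [hσ]) (by simpa using h1)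
  have h3 := hp.cv_map (evh (𝟙 A) a)
  rw [← Category.assoc, h2, Category.assoc, ← Category.assoc (σ k), hfix] at h3
  exact h3.cv_inj h1

lemma IsJ.comp_eq {S : Scheme.{u}} (γ : P1 S ⟶ P1 S) [IsIso γ] (hγ : γ ≫ P1proj S = P1proj S) 
    {i : Fin 2} {i₀ : Spec A ⟶ S} {j : Spec (PP A) ⟶ P1 S} (h : IsJ i i₀ j)
    {p p' : Polynomial A} (hp : Rep (A := PP A) (j ≫ γ ≫ P1snd S) (cv i p))
    (hp' : Rep (A := PP A) (j ≫ inv γ ≫ P1snd S) (cv i p')) : p'.comp p = Polynomial.X := by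
  have h2 := h.ev (cA A) p (j ≫ γ) (by rw [Category.assoc, hγ, h.1]) (by simpa using hp)
  have h3 := hp'.cv_map (evh (cA A) p)
  rw [← Category.assoc, h2, Category.assoc, IsIso.hom_inv_id_assoc] at h3
  exact h3.cv_inj h.2

lemma IsJ.laurent {S : Scheme.{u}} (γ : P1 S ⟶ P1 S) {i₀ : Spec A ⟶ S} {j0 j1 : Spec (PP A) ⟶ P1 S}
    (h0 : IsJ 0 i₀ j0) (h1 : IsJ 1 i₀ j1)
    {p q : Polynomial A} (hp : Rep (A := PP A) (j0 ≫ γ ≫ P1snd S) (cv 0 p))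
    (hq : Rep (A := PP A) (j1 ≫ γ ≫ P1snd S) (cv 1 q)) :
    Polynomial.toLaurent p * LaurentPolynomial.invert (Polynomial.toLaurent q) = 1 := by
  let L : CommRingCat.{u} := .of (LaurentPolynomial A)
  let l : PP A ⟶ L := CommRingCat.ofHom Polynomial.toLaurent
  let m : PP A ⟶ L := CommRingCat.ofHom
    ((LaurentPolynomial.invert (R := A)).toRingEquiv.toRingHom.comp Polynomial.toLaurent)
  have hl : ∀ f : Polynomial A, l.hom f = Polynomial.toLaurent f := fun _ => rfl
  have hm : ∀ f : Polynomial A, m.hom f = LaurentPolynomial.invert (Polynomial.toLaurent f) := fun _ => rfl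
  have hc : cA A ≫ l = cA A ≫ m := by
    apply CommRingCat.hom_ext
    apply RingHom.ext
    intro x
    change Polynomial.toLaurent (Polynomial.C x)
      = LaurentPolynomial.invert (Polynomial.toLaurent (Polynomial.C x))
    simp
  have hj : Spec.map l ≫ j0 = Spec.map m ≫ j1 := by
    apply P1ext
    · rw [Category.assoc, Category.assoc, h0.1, h1.1, ← Spec.map_comp_assoc, ← Spec.map_comp_assoc, hc]
    · have a0 := h0.2.cv_map l
      have a1 := h1.2.cv_map m
      rw [Category.assoc, Category.assoc]
      refine (a0.of_cross a1.1 ?_).unique a1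
      rw [hl, hm]
      have hT : (LaurentPolynomial.T 1 * LaurentPolynomial.T (-1) : LaurentPolynomial A) = 1 := by
        rw [← LaurentPolynomial.T_add]; simp
      change (1 * 1 : LaurentPolynomial A) = Polynomial.toLaurent Polynomial.X *
        LaurentPolynomial.invert (Polynomial.toLaurent Polynomial.X)
      rw [Polynomial.toLaurent_X, LaurentPolynomial.invert_T, hT, one_mul]
  have a0 := hp.cv_map l
  have a1 := hq.cv_map m
  rw [← Category.assoc, hj, Category.assoc] at a0
  have := a0.cross a1
  rw [hl, hm] at this
  simpa [cv] using this.symm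

lemma uniq_aux {S : Scheme.{u}} (σ : Fin 3 → (S ⟶ P1 S)) (hσ : ∀ i, σ i ≫ P1proj S = 𝟙 S)
    (hσ' : ∀ (A : CommRingCat.{u}) (t : Spec A ⟶ S) k, Rep (t ≫ σ k ≫ P1snd S) (ee A k))
    (γ : P1 S ⟶ P1 S) [IsIso γ] (hγ : γ ≫ P1proj S = P1proj S) 
    (hfix : ∀ k, σ k ≫ γ = σ k) : γ = 𝟙 (P1 S) := by
  have hfix' : ∀ k, σ k ≫ inv γ = σ k := fun k => by
    rw [IsIso.comp_inv_eq, hfix]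
  have main : ∀ (A : CommRingCat.{u}) (i₀ : Spec A ⟶ S) (i : Fin 2), ∃ j, IsJ i i₀ j ∧ j ≫ γ = j := by
    intro A i₀
    obtain ⟨j0, h0⟩ := exists_isJ 0 i₀
    obtain ⟨j1, h1⟩ := exists_isJ 1 i₀
    obtain ⟨p, hp⟩ := h0.exists_poly σ hσ hσ' γ hfix
    obtain ⟨p', hp'⟩ := h0.exists_poly σ hσ hσ' (inv γ) hfix'
    obtain ⟨q, hq⟩ := h1.exists_poly σ hσ hσ' γ hfix
    obtain ⟨rfl, rfl⟩ := poly_rigid p p' q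
      (h0.eval_eq σ hσ hσ' γ hfix hp 0 0 rfl)
      (h0.eval_eq σ hσ hσ' (inv γ) hfix' hp' 0 0 rfl)
      (h1.eval_eq σ hσ hσ' γ hfix hq 1 0 rfl)
      (h0.comp_eq γ hγ hp hp')
      (h0.eval_eq σ hσ hσ' γ hfix hp 2 1 rfl)
      (h0.laurent γ h1 hp hq)
    have e0 : j0 ≫ γ = j0 := by
      apply P1ext
      · rw [Category.assoc, hγ]
      · rw [Category.assoc]; exact hp.unique h0.2
    have e1 : j1 ≫ γ = j1 := by
      apply P1ext
      · rw [Category.assoc, hγ]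
      · rw [Category.assoc]; exact hq.unique h1.2
    rw [Fin.forall_fin_two]
    exact ⟨⟨j0, h0, e0⟩, ⟨j1, h1, e1⟩⟩
  apply Loc.ext
  intro x
  obtain ⟨i, hi⟩ := UU_cover (P1snd S x)
  refine ⟨P1snd S ⁻¹ᵁ UU i, hi, fun A t ht => ?_⟩
  obtain ⟨a, ha⟩ := exists_cv i (t ≫ P1snd S) (by
    rintro _ ⟨y, rfl⟩
    exact ht ⟨y, rfl⟩)
  obtain ⟨j, hj, e⟩ := main A (t ≫ P1proj S) i
  have := hj.ev (𝟙 A) a t (by simp) ha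
  rw [← this, Category.assoc, e, Category.comp_id]

end

end P1Aux

/-- Let `S` be a scheme and `s₁, s₂, s₃, s₁′, s₂′, s₃′ : S → ℙ¹_S` six
sections of `ℙ¹_S → S` such that the images of `s₁, s₂, s₃` are pairwise disjoint and the
images of `s₁′, s₂′, s₃′` are pairwise disjoint. Then there is a unique `S`-automorphism `β`
of `ℙ¹_S` with `β ∘ sᵢ = sᵢ′` for `i = 1, 2, 3`. -/
theorem stmt4 (S : Scheme.{u}) (s s' : Fin 3 → (S ⟶ P1 S))
    (hs : ∀ i, s i ≫ P1proj S = 𝟙 S) (hs' : ∀ i, s' i ≫ P1proj S = 𝟙 S)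
    (hdisj : ∀ i j : Fin 3, i ≠ j →
      Disjoint (Set.range (s i).base) (Set.range (s j).base))
    (hdisj' : ∀ i j : Fin 3, i ≠ j →
      Disjoint (Set.range (s' i).base) (Set.range (s' j).base)) :
    ∃! β : P1 S ⟶ P1 S, IsIso β ∧ β ≫ P1proj S = P1proj S ∧
      ∀ i : Fin 3, s i ≫ β = s' i := by
  obtain ⟨τ, hτ⟩ := P1Aux.exists_std S
  let σ : Fin 3 → (S ⟶ P1 S) := fun k => P1Aux.P1lift (𝟙 S) (τ k)
  have hσ : ∀ i, σ i ≫ P1proj S = 𝟙 S := fun i => by simp [σ]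
  have hσ' : ∀ (A : CommRingCat.{u}) (t : Spec A ⟶ S) k,
      P1Aux.Rep (t ≫ σ k ≫ P1Aux.P1snd S) (P1Aux.ee A k) := fun A t k => by
    simpa [σ] using hτ A t k
  obtain ⟨β, iβ, hβ, eβ⟩ := P1Aux.exists_beta s σ hs hdisj hσ hσ'
  obtain ⟨β', iβ', hβ', eβ'⟩ := P1Aux.exists_beta s' σ hs' hdisj' hσ hσ'
  refine ⟨inv β ≫ β', ⟨inferInstance, ?_, fun i => ?_⟩, ?_⟩
  · rw [Category.assoc, hβ', IsIso.inv_comp_eq, hβ]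
  · rw [← eβ, Category.assoc, IsIso.hom_inv_id_assoc, eβ']
  · rintro δ ⟨iδ, hδ, eδ⟩
    have h := P1Aux.uniq_aux σ hσ hσ' (β ≫ δ ≫ inv β')
      (by
        have : inv β' ≫ P1proj S = P1proj S := by rw [IsIso.inv_comp_eq, hβ']
        rw [Category.assoc, Category.assoc, this, hδ, hβ])
      (fun k => by
        rw [← Category.assoc, eβ, ← Category.assoc, eδ, IsIso.comp_inv_eq, eβ'])
    rw [← Category.assoc, IsIso.comp_inv_eq, Category.id_comp] at h
    rw [← h, IsIso.inv_hom_id_assoc]
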